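/- Let G be a P4-sparse graph and let A be a set of four vertices inducing a P4 in G. Then there do not exist a vertex v in P(A) and distinct vertices x, y in I(A) such that v is adjacent to both x and y. -/

import Mathlib

open SimpleGraph

variable {V : Type*}

/-- `a, b, c, d` form an induced path on four vertices (a `P4`) in `G`. -/
def IsP4 (G : SimpleGraph V) (a b c d : V) : Prop :=
  a ≠ b ∧ a ≠ c ∧ a ≠ d ∧ b ≠ c ∧ b ≠ d ∧ c ≠ d ∧
    G.Adj a b ∧ G.Adj b c ∧ G.Adj c d ∧ ¬G.Adj a c ∧ ¬G.Adj a d ∧ ¬G.Adj b d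

/-- A graph is a cograph if it contains no induced `P4`. -/
def IsCograph (G : SimpleGraph V) : Prop :=
  ∀ a b c d : V, ¬IsP4 G a b c d

/-- The vertex set `A` induces a `P4` in `G`. -/
def InducesP4 (G : SimpleGraph V) (A : Set V) : Prop :=
  ∃ a b c d : V, IsP4 G a b c d ∧ A = {a, b, c, d}

/-- `G` is `P4`-sparse: every set of five vertices induces at most one `P4`. -/
def P4Sparse (G : SimpleGraph V) : Prop :=
  ∀ s : Set V, s.ncard = 5 →
    ∀ A B : Set V, A ⊆ s → B ⊆ s → InducesP4 G A → InducesP4 G B → A = B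

/-- `F` is a deletion set of `G`: a set of edges of `G` whose removal yields a cograph. -/
def IsDeletionSet (G : SimpleGraph V) (F : Set (Sym2 V)) : Prop :=
  F ⊆ G.edgeSet ∧ IsCograph (G.deleteEdges F)

/-- The minimum size of a deletion set of `G`. -/
noncomputable def cographAlpha (G : SimpleGraph V) : ℕ :=
  sInf {n | ∃ F : Set (Sym2 V), IsDeletionSet G F ∧ F.ncard = n}

/-- `T(A)`: the vertices outside `A` adjacent to all vertices of `A`. -/
def tSet (G : SimpleGraph V) (A : Set V) : Set V :=
  {v | v ∉ A ∧ ∀ a ∈ A, G.Adj v a}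

/-- `I(A)`: the vertices outside `A` adjacent to no vertex of `A`. -/
def iSet (G : SimpleGraph V) (A : Set V) : Set V :=
  {v | v ∉ A ∧ ∀ a ∈ A, ¬G.Adj v a}

/-- `P(A)`: the vertices `v` outside `A` with `1 ≤ |N(v) ∩ A| ≤ 3`. -/
def pSet (G : SimpleGraph V) (A : Set V) : Set V :=
  {v | v ∉ A ∧ 1 ≤ (G.neighborSet v ∩ A).ncard ∧ (G.neighborSet v ∩ A).ncard ≤ 3}

/-! Let `A = {a, b, c, d}` induce the path `a - b - c - d`. The five vertices of `A ∪ {v}` induce no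
`P4` other than `A`, so none on the quadruples through `v`: if `v` is not adjacent to `b`, it is
adjacent to both or neither of `a` and `c`; if it is adjacent to `d`, it is adjacent to both or
neither of `a` and `b`; and the same holds for the reversed path. A vertex `v` adjacent to an end of
the path is therefore adjacent to all of `A`, which leaves a vertex of `P(A)` adjacent to exactly
the midpoints `b` and `c`. Each neighbour `x ∈ I(A)` of such a `v` then gives an induced path
`a - b - v - x`, and two such neighbours would give two `P4`s on five vertices.
-/

section

variable {G : SimpleGraph V} {A B : Set V} {a b c d e v : V}

lemma isP4_iff : IsP4 G a b c d ↔
    G.Adj a b ∧ G.Adj b c ∧ G.Adj c d ∧ ¬G.Adj a c ∧ ¬G.Adj a d ∧ ¬G.Adj b d := by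
  refine ⟨fun h ↦ h.2.2.2.2.2.2, fun h ↦ ?_⟩
  obtain ⟨hab, hbc, hcd, hac, had, hbd⟩ := h
  have hne_ac : a ≠ c := fun h ↦ had (h ▸ hcd)
  have hne_ad : a ≠ d := fun h ↦ hbd (h ▸ hab.symm)
  have hne_bd : b ≠ d := fun h ↦ had (h ▸ hab)
  exact ⟨hab.ne, hne_ac, hne_ad, hbc.ne, hne_bd, hcd.ne, hab, hbc, hcd, hac, had, hbd⟩

lemma IsP4.reverse (h : IsP4 G a b c d) : IsP4 G d c b a := by
  obtain ⟨hab, hbc, hcd, hac, had, hbd⟩ := isP4_iff.mp h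
  exact isP4_iff.mpr ⟨hcd.symm, hbc.symm, hab.symm,
    mt Adj.symm hbd, mt Adj.symm had, mt Adj.symm hac⟩

lemma IsP4.inducesP4 (h : IsP4 G a b c d) : InducesP4 G {a, b, c, d} :=
  ⟨a, b, c, d, h, rfl⟩

lemma InducesP4.ncard_eq_four (hA : InducesP4 G A) : A.ncard = 4 := by
  obtain ⟨a, b, c, d, ⟨hab, hac, had, hbc, hbd, hcd, -⟩, rfl⟩ := hA
  rw [Set.ncard_insert_of_notMem (by simp [*]), Set.ncard_insert_of_notMem (by simp [*]),
    Set.ncard_pair hcd]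

lemma P4Sparse.eq_of_subset_insert (hG : P4Sparse G) (hA : InducesP4 G A) (hB : InducesP4 G B)
    (hBA : B ⊆ insert v A) : B = A := by
  have hA_fin : A.Finite := Set.finite_of_ncard_ne_zero (by simp [hA.ncard_eq_four])
  by_cases hv : v ∈ A
  · rw [Set.insert_eq_of_mem hv] at hBA
    exact Set.eq_of_subset_of_ncard_le hBA (by rw [hA.ncard_eq_four, hB.ncard_eq_four]) hA_fin
  · have hcard : (insert v A).ncard = 5 := by
      rw [Set.ncard_insert_of_notMem hv hA_fin, hA.ncard_eq_four]
    exact hG _ hcard B A hBA (Set.subset_insert v A) hB hA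

lemma P4Sparse.notMem_of_subset_insert (hG : P4Sparse G) (hA : InducesP4 G A)
    (hB : InducesP4 G B) (hBA : B ⊆ insert v A) (hv : v ∉ A) : v ∉ B :=
  hG.eq_of_subset_insert hA hB hBA ▸ hv

lemma P4Sparse.isP4_right_unique (hG : P4Sparse G) (hd : IsP4 G a b c d) (he : IsP4 G a b c e) :
    d = e := by
  have heq : ({a, b, c, e} : Set V) = {a, b, c, d} :=
    hG.eq_of_subset_insert (v := e) hd.inducesP4 he.inducesP4 (by grind)
  have hmem : e ∈ ({a, b, c, d} : Set V) := heq ▸ by simp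
  obtain ⟨-, -, hae, -, hbe, hce, -⟩ := he
  simpa [hae.symm, hbe.symm, hce.symm, eq_comm] using hmem

lemma P4Sparse.adj_first_iff_adj_third (hG : P4Sparse G) (h : IsP4 G a b c d)
    (hv : v ∉ ({a, b, c, d} : Set V)) (hvb : ¬G.Adj v b) : G.Adj v a ↔ G.Adj v c := by
  obtain ⟨hab, hbc, -, hac, -, -⟩ := isP4_iff.mp h
  constructor
  · intro hva
    by_contra hvc
    have hP4 : IsP4 G v a b c := isP4_iff.mpr ⟨hva, hab, hbc, hvb, hvc, hac⟩
    exact hG.notMem_of_subset_insert h.inducesP4 hP4.inducesP4 (by grind) hv (by simp)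
  · intro hvc
    by_contra hva
    have hP4 : IsP4 G v c b a :=
      isP4_iff.mpr ⟨hvc, hbc.symm, hab.symm, hvb, hva, mt Adj.symm hac⟩
    exact hG.notMem_of_subset_insert h.inducesP4 hP4.inducesP4 (by grind) hv (by simp)

lemma P4Sparse.adj_first_iff_adj_second (hG : P4Sparse G) (h : IsP4 G a b c d)
    (hv : v ∉ ({a, b, c, d} : Set V)) (hvd : G.Adj v d) : G.Adj v a ↔ G.Adj v b := by
  obtain ⟨hab, -, -, -, had, hbd⟩ := isP4_iff.mp h
  constructor
  · intro hva
    by_contra hvb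
    have hP4 : IsP4 G b a v d :=
      isP4_iff.mpr ⟨hab.symm, hva.symm, hvd, mt Adj.symm hvb, hbd, had⟩
    exact hG.notMem_of_subset_insert h.inducesP4 hP4.inducesP4 (by grind) hv (by simp)
  · intro hvb
    by_contra hva
    have hP4 : IsP4 G a b v d := isP4_iff.mpr ⟨hab, hvb.symm, hvd, mt Adj.symm hva, had, hbd⟩
    exact hG.notMem_of_subset_insert h.inducesP4 hP4.inducesP4 (by grind) hv (by simp)

lemma P4Sparse.adj_of_adj_first (hG : P4Sparse G) (h : IsP4 G a b c d)
    (hv : v ∉ ({a, b, c, d} : Set V)) (hva : G.Adj v a) :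
    ∀ w ∈ ({a, b, c, d} : Set V), G.Adj v w := by
  have hv_rev : v ∉ ({d, c, b, a} : Set V) := by grind
  have hdc : G.Adj v d ↔ G.Adj v c := hG.adj_first_iff_adj_second h.reverse hv_rev hva
  have hvb : G.Adj v b := by
    by_contra hvb
    have hvc : G.Adj v c := (hG.adj_first_iff_adj_third h hv hvb).mp hva
    exact hvb ((hG.adj_first_iff_adj_second h hv (hdc.mpr hvc)).mp hva)
  have hvc : G.Adj v c := by
    by_contra hvc
    exact hvc (hdc.mp ((hG.adj_first_iff_adj_third h.reverse hv_rev hvc).mpr hvb))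
  rintro w (rfl | rfl | rfl | rfl)
  exacts [hva, hvb, hvc, hdc.mpr hvc]

lemma exists_adj_of_mem_pSet (hv : v ∈ pSet G A) : ∃ w ∈ A, G.Adj v w := by
  obtain ⟨w, hvw, hw⟩ := Set.nonempty_of_ncard_ne_zero (Nat.one_le_iff_ne_zero.mp hv.2.1)
  exact ⟨w, hw, hvw⟩

lemma exists_not_adj_of_mem_pSet (hA : 3 < A.ncard) (hv : v ∈ pSet G A) :
    ∃ w ∈ A, ¬G.Adj v w := by
  by_contra! hall
  have hinter : G.neighborSet v ∩ A = A := Set.inter_eq_right.mpr hall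
  exact (hinter ▸ hv.2.2).not_gt hA

lemma P4Sparse.not_adj_first_of_mem_pSet (hG : P4Sparse G) (h : IsP4 G a b c d)
    (hv : v ∈ pSet G {a, b, c, d}) : ¬G.Adj v a := by
  intro hva
  obtain ⟨w, hw, hvw⟩ := exists_not_adj_of_mem_pSet (by simp [h.inducesP4.ncard_eq_four]) hv
  exact hvw (hG.adj_of_adj_first h hv.1 hva w hw)

lemma P4Sparse.adj_second_of_mem_pSet (hG : P4Sparse G) (h : IsP4 G a b c d)
    (hv : v ∈ pSet G {a, b, c, d}) : G.Adj v b := by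
  have hset : ({d, c, b, a} : Set V) = {a, b, c, d} := by grind
  have hva : ¬G.Adj v a := hG.not_adj_first_of_mem_pSet h hv
  have hvd : ¬G.Adj v d := hG.not_adj_first_of_mem_pSet h.reverse (hset ▸ hv)
  by_contra hvb
  have hvc : ¬G.Adj v c := mt (hG.adj_first_iff_adj_third h hv.1 hvb).mpr hva
  obtain ⟨w, rfl | rfl | rfl | rfl, hvw⟩ := exists_adj_of_mem_pSet hv
  exacts [hva hvw, hvb hvw, hvc hvw, hvd hvw]

end

/-- **Observation 2.6, complement form.** If `G` is `P4`-sparse and `A`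
induces a `P4`, then there are no `v ∈ P(A)` and distinct `x, y ∈ I(A)` such that `v` is
adjacent to both `x` and `y`. -/
theorem p4Sparse_obs_2_6_compl (G : SimpleGraph V) (hG : P4Sparse G)
    (a b c d : V) (hP4 : IsP4 G a b c d) (A : Set V) (hA : A = {a, b, c, d}) :
    ¬∃ v x y : V, x ≠ y ∧ v ∈ pSet G A ∧ x ∈ iSet G A ∧ y ∈ iSet G A ∧
      G.Adj v x ∧ G.Adj v y := by
  subst hA
  rintro ⟨v, x, y, hxy, hv, hx, hy, hvx, hvy⟩
  have hab : G.Adj a b := (isP4_iff.mp hP4).1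
  have hva : ¬G.Adj v a := hG.not_adj_first_of_mem_pSet hP4 hv
  have hvb : G.Adj v b := hG.adj_second_of_mem_pSet hP4 hv
  have hpath : ∀ z ∈ iSet G {a, b, c, d}, G.Adj v z → IsP4 G a b v z := fun z hz hvz ↦
    isP4_iff.mpr ⟨hab, hvb.symm, hvz, mt Adj.symm hva, mt Adj.symm (hz.2 a (by simp)),
      mt Adj.symm (hz.2 b (by simp))⟩
  exact hxy (hG.isP4_right_unique (hpath x hx hvx) (hpath y hy hvy))
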